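/- Let ξ be a solid partition with legs (π¹,π²,π³,π⁴) with π⁴ = ∅. Then Σ_{□ ∈ ξ_fin} (1 − nlegs(□)) · ( |ξ ∩ S₋(□)| + Σ_{□' ∈ ξ ∩ S₊(□)} nlegs(□') ) ≡ NP₄(ξ) (mod 2), all sums involved being finite. (This is the combinatorial form of the paper's Lemma: the rank of the A-fixed part of the character C(ξ_fin, ξ)·t₄^{-1}·τ₁₂₃^∨ is congruent to NP₄(ξ) modulo 2.) -/

import Mathlib

open scoped BigOperators

/-- A subset of `ℕ^d` is downward closed if it contains `p − e` whenever it contains `p`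
and `p − e ∈ ℕ^d`, for a standard basis vector `e`. -/
def DownClosed {d : ℕ} (S : Set (Fin d → ℕ)) : Prop :=
  ∀ p ∈ S, ∀ i : Fin d, 0 < p i → Function.update p i (p i - 1) ∈ S

/-- `proj i` deletes the `i`-th coordinate of a point of `ℕ⁴`. -/
def proj (i : Fin 4) (p : Fin 4 → ℕ) : Fin 3 → ℕ := fun j => p (i.succAbove j)

/-- A plane partition is a finite downward closed subset of `ℕ³`. -/
def IsPlanePartition (π : Set (Fin 3 → ℕ)) : Prop := π.Finite ∧ DownClosed π

/-- A solid partition with legs `(π 0, π 1, π 2, π 3)`: a downward closed subset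
`ξ ⊆ ℕ⁴` such that, far enough along the `i`-th axis, membership in `ξ` is governed by
the plane partition `π i`. -/
def IsSolidPartitionWithLegs (π : Fin 4 → Set (Fin 3 → ℕ)) (ξ : Set (Fin 4 → ℕ)) : Prop :=
  (∀ i, IsPlanePartition (π i)) ∧ DownClosed ξ ∧
    ∃ N : ℕ, ∀ i : Fin 4, ∀ p : Fin 4 → ℕ, N ≤ p i → (p ∈ ξ ↔ proj i p ∈ π i)

/-- The number of legs containing a box. -/
noncomputable def nlegs (π : Fin 4 → Set (Fin 3 → ℕ)) (p : Fin 4 → ℕ) : ℕ :=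
  {i : Fin 4 | proj i p ∈ π i}.ncard

/-- `S₋(□) = {□ − (ε₁,ε₂,ε₃,1) − m·(1,1,1,1) : ε ∈ {0,1}³, m ∈ ℕ} ∩ ℕ⁴`. -/
def Sminus (n : Fin 4 → ℕ) : Set (Fin 4 → ℕ) :=
  { x | ∃ ε : Fin 3 → ℕ, (∀ t, ε t ≤ 1) ∧ ∃ m : ℕ,
      ∀ t : Fin 4, (x t : ℤ) =
        (n t : ℤ) - (if h : (t : ℕ) < 3 then (ε ⟨t, h⟩ : ℤ) else 1) - (m : ℤ) }

/-- `S₊(□) = {□ + (ε₁,ε₂,ε₃,0) + m·(1,1,1,1) : ε ∈ {0,1}³, m ∈ ℕ}`. -/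
def Splus (n : Fin 4 → ℕ) : Set (Fin 4 → ℕ) :=
  { x | ∃ ε : Fin 3 → ℕ, (∀ t, ε t ≤ 1) ∧ ∃ m : ℕ,
      ∀ t : Fin 4, x t = n t + (if h : (t : ℕ) < 3 then ε ⟨t, h⟩ else 0) + m }

/-! Fix a box `p ∈ ξ` and work modulo 2. In `S₊(p)` the coordinates `x₀, x₁, x₂` each range over two
consecutive values independently of the others, and moving `x i` between its two values preserves
membership in the `i`-th leg; since the fourth leg is empty, the sum of `nlegs` over `ξ ∩ S₊(p)` is
even. The set `S₋(p)` lies in `ξ` and is a union of unit cubes cut off at the coordinate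
hyperplanes; such a cube keeps an odd number of boxes only if it is cut down to a single one by all
three hyperplanes, which happens for one cube if `p 0 = p 1 = p 2 < p 3` and for none otherwise.
So only the diagonal boxes contribute, each with weight `1 - nlegs`, and this weight vanishes off
`ξ_fin`. -/

section Parity

variable {α : Type*}

theorem even_ncard_of_involution {s : Set α} (hs : s.Finite) (g : α → α)
    (hg_mem : ∀ x ∈ s, g x ∈ s) (hg_ne : ∀ x ∈ s, g x ≠ x) (hg_inv : ∀ x ∈ s, g (g x) = x) :
    Even s.ncard := by
  lift s to Finset α using hs
  have hsum : ∑ _x ∈ s, (1 : ZMod 2) = 0 :=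
    Finset.sum_involution (fun x _ => g x) (fun _ _ => by decide) (fun x hx _ => hg_ne x hx)
      hg_mem hg_inv
  rw [Set.ncard_coe_finset, ← ZMod.natCast_eq_zero_iff_even]
  simpa using hsum

theorem finsum_mem_modEq {n : ℤ} {s : Set α} {f g : α → ℤ} (hs : s.Finite)
    (h : ∀ x ∈ s, f x ≡ g x [ZMOD n]) : ∑ᶠ x ∈ s, f x ≡ ∑ᶠ x ∈ s, g x [ZMOD n] := by
  lift s to Finset α using hs
  simpa only [finsum_mem_coe_finset] using Int.ModEq.sum h

end Parity

theorem DownClosed.isLowerSet {d : ℕ} {S : Set (Fin d → ℕ)} (hS : DownClosed S) :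
    IsLowerSet S := by
  intro p q hqp hp
  rw [le_iff_reflTransGen_covBy] at hqp
  induction hqp using Relation.ReflTransGen.head_induction_on with
  | refl => exact hp
  | @head _ r hcov _ hr =>
    obtain ⟨i, k, hk, rfl⟩ := Pi.covBy_iff_exists_left_eq.1 hcov
    have hk : k + 1 = r i := Order.covBy_iff_add_one_eq.1 hk
    simpa [← hk] using hS r hr i (by lia)

section Legs

variable {π : Fin 4 → Set (Fin 3 → ℕ)} {ξ : Set (Fin 4 → ℕ)}

@[simp]
theorem proj_update_self (i : Fin 4) (x : Fin 4 → ℕ) (k : ℕ) :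
    proj i (Function.update x i k) = proj i x :=
  funext fun _ => by simp [proj]

theorem eq_of_proj_eq_of_ne {i j : Fin 4} (hij : i ≠ j) {x y : Fin 4 → ℕ}
    (hi : proj i x = proj i y) (hj : proj j x = proj j y) : x = y := by
  funext t
  by_cases ht : t = i
  · obtain ⟨k, rfl⟩ := Fin.exists_succAbove_eq (ht.trans_ne hij)
    exact congrFun hj k
  · obtain ⟨k, rfl⟩ := Fin.exists_succAbove_eq ht
    exact congrFun hi k

theorem finite_setOf_proj_mem_and_proj_mem {i j : Fin 4} (hij : i ≠ j) {s t : Set (Fin 3 → ℕ)}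
    (hs : s.Finite) (ht : t.Finite) : {x | proj i x ∈ s ∧ proj j x ∈ t}.Finite :=
  Set.Finite.of_injOn (f := fun x => (proj i x, proj j x)) (t := s ×ˢ t) (fun _ hx => hx)
    (fun _ _ _ _ h => eq_of_proj_eq_of_ne hij (congrArg Prod.fst h) (congrArg Prod.snd h))
    (hs.prod ht)

theorem exists_ne_proj_mem_of_nlegs_ne_one {p : Fin 4 → ℕ} {i : Fin 4} (hi : proj i p ∈ π i)
    (hp : nlegs π p ≠ 1) : ∃ j ≠ i, proj j p ∈ π j := by
  contrapose! hp
  exact Set.ncard_eq_one.2 ⟨i, Set.eq_singleton_iff_unique_mem.2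
    ⟨hi, fun j hj => by_contra fun hji => hp j hji hj⟩⟩

theorem finsum_mem_nlegs {s : Set (Fin 4 → ℕ)} (hs : s.Finite) :
    ∑ᶠ x ∈ s, (nlegs π x : ℤ) = ∑ i, ({x ∈ s | proj i x ∈ π i}.ncard : ℤ) := by
  classical
  lift s to Finset (Fin 4 → ℕ) using hs
  let inLeg (x : Fin 4 → ℕ) (i : Fin 4) : Prop := proj i x ∈ π i
  have hnlegs (x : Fin 4 → ℕ) : nlegs π x = (Finset.univ.bipartiteAbove inLeg x).card := by
    rw [← Set.ncard_coe_finset, Finset.coe_bipartiteAbove]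
    simp [nlegs, inLeg]
  have hleg (i : Fin 4) :
      {x | x ∈ s ∧ proj i x ∈ π i}.ncard = (s.bipartiteBelow inLeg i).card := by
    rw [← Set.ncard_coe_finset, Finset.coe_bipartiteBelow]
  rw [finsum_mem_coe_finset]
  simp only [Finset.mem_coe, hnlegs, hleg]
  exact_mod_cast Finset.sum_card_bipartiteAbove_eq_sum_card_bipartiteBelow inLeg

namespace IsSolidPartitionWithLegs

theorem mem_of_proj_mem (hξ : IsSolidPartitionWithLegs π ξ) {i : Fin 4} {x : Fin 4 → ℕ}
    (hx : proj i x ∈ π i) : x ∈ ξ := by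
  obtain ⟨-, hdown, N, hN⟩ := hξ
  have hfar : Function.update x i (max N (x i)) ∈ ξ := by simp [hN i, hx]
  exact hdown.isLowerSet (le_update_self_iff.2 (le_max_right _ _)) hfar

theorem finite_setOf_nlegs_ne_one (hξ : IsSolidPartitionWithLegs π ξ) :
    {p ∈ ξ | nlegs π p ≠ 1}.Finite := by
  obtain ⟨hπ, -, N, hN⟩ := hξ
  have htwo : (⋃ (i) (j) (_ : j ≠ i), {p | proj j p ∈ π j ∧ proj i p ∈ π i}).Finite :=
    Set.finite_iUnion fun i => Set.finite_iUnion fun j => Set.finite_iUnion fun hji =>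
      finite_setOf_proj_mem_and_proj_mem hji (hπ j).1 (hπ i).1
  refine ((Set.finite_Iic fun _ => N).union htwo).subset ?_
  rintro p ⟨hp, hlegs⟩
  by_cases hle : p ≤ fun _ => N
  · exact .inl hle
  · obtain ⟨i, hi⟩ := not_forall.1 hle
    have hpi : proj i p ∈ π i := (hN i p (not_le.1 hi).le).1 hp
    obtain ⟨j, hji, hpj⟩ := exists_ne_proj_mem_of_nlegs_ne_one hpi hlegs
    exact .inr (Set.mem_iUnion₂.2 ⟨i, j, Set.mem_iUnion.2 ⟨hji, hpj, hpi⟩⟩)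

theorem exists_forall_mem_lt_of_leg_eq_empty (hξ : IsSolidPartitionWithLegs π ξ) {i : Fin 4}
    (hi : π i = ∅) : ∃ N, ∀ x ∈ ξ, x i < N := by
  obtain ⟨-, -, N, hN⟩ := hξ
  refine ⟨N, fun x hx => not_le.1 fun hle => ?_⟩
  simpa [hi] using (hN i x hle).1 hx

end IsSolidPartitionWithLegs

end Legs

section Splus

variable {π : Fin 4 → Set (Fin 3 → ℕ)} {ξ : Set (Fin 4 → ℕ)} {p x : Fin 4 → ℕ} {i : Fin 4}

theorem mem_Splus_iff : x ∈ Splus p ↔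
    p 3 ≤ x 3 ∧ ∀ i ≠ 3, x i + p 3 = p i + x 3 ∨ x i + p 3 = p i + x 3 + 1 := by
  constructor
  · rintro ⟨ε, hε, m, h⟩
    have h3 : x 3 = p 3 + m := by simpa using h 3
    refine ⟨by lia, fun i hi => ?_⟩
    have hi' : (i : ℕ) < 3 := by lia
    have hxi := h i
    rw [dif_pos hi'] at hxi
    have := hε ⟨i, hi'⟩
    lia
  · rintro ⟨h3, h⟩
    refine ⟨fun t => x t.castSucc + p 3 - (p t.castSucc + x 3), fun t => ?_, x 3 - p 3, ?_⟩
    · have := h t.castSucc (Fin.castSucc_ne_last t)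
      lia
    · refine Fin.lastCases ?_ fun t => ?_
      · simp [h3]
      · have := h t.castSucc (Fin.castSucc_ne_last t)
        simp only [Fin.val_castSucc, Fin.is_lt, ↓reduceDIte, Fin.eta]
        lia

/-- Exchanges the two values allowed for the `i`-th coordinate of a box of `Splus p`; the first
case is that of the smaller value, `p i` plus the height `x 3 - p 3` of the box above `p`. -/
def flipCoord (p : Fin 4 → ℕ) (i : Fin 4) (x : Fin 4 → ℕ) : Fin 4 → ℕ :=
  Function.update x i (if x i + p 3 = p i + x 3 then x i + 1 else x i - 1)

theorem flipCoord_apply (p : Fin 4 → ℕ) (i : Fin 4) (x : Fin 4 → ℕ) (t : Fin 4) :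
    flipCoord p i x t =
      if t = i then if x i + p 3 = p i + x 3 then x i + 1 else x i - 1 else x t :=
  Function.update_apply x i _ t

theorem flipCoord_mem_Splus (hi : i ≠ 3) (hx : x ∈ Splus p) : flipCoord p i x ∈ Splus p := by
  rw [mem_Splus_iff] at hx ⊢
  have := hx.2 i hi
  grind [flipCoord_apply]

theorem flipCoord_ne_self (hi : i ≠ 3) (hx : x ∈ Splus p) : flipCoord p i x ≠ x := by
  rw [mem_Splus_iff] at hx
  have := hx.2 i hi
  intro h
  have := congrFun h i
  grind [flipCoord_apply]

theorem flipCoord_flipCoord (hi : i ≠ 3) (hx : x ∈ Splus p) :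
    flipCoord p i (flipCoord p i x) = x := by
  rw [mem_Splus_iff] at hx
  have := hx.2 i hi
  grind [flipCoord_apply]

theorem even_ncard_Splus_proj_mem (hi : i ≠ 3) {s : Set (Fin 3 → ℕ)}
    (hs : {x ∈ Splus p | proj i x ∈ s}.Finite) : Even {x ∈ Splus p | proj i x ∈ s}.ncard :=
  even_ncard_of_involution hs (flipCoord p i)
    (fun _ hx => ⟨flipCoord_mem_Splus hi hx.1, by simpa [flipCoord] using hx.2⟩)
    (fun _ hx => flipCoord_ne_self hi hx.1) (fun _ hx => flipCoord_flipCoord hi hx.1)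

theorem IsSolidPartitionWithLegs.even_finsum_nlegs_Splus (hξ : IsSolidPartitionWithLegs π ξ)
    (h4 : π 3 = ∅) (hfin : (ξ ∩ Splus p).Finite) :
    Even (∑ᶠ x ∈ ξ ∩ Splus p, (nlegs π x : ℤ)) := by
  rw [finsum_mem_nlegs hfin]
  refine Finset.even_sum _ fun i _ => ?_
  rw [Int.even_coe_nat]
  by_cases hi : i = 3
  · simp [hi, h4]
  · have hleg : {x ∈ ξ ∩ Splus p | proj i x ∈ π i} = {x ∈ Splus p | proj i x ∈ π i} :=
      Set.ext fun x => ⟨fun hx => ⟨hx.1.2, hx.2⟩, fun hx => ⟨⟨hξ.mem_of_proj_mem hx.2, hx.1⟩, hx.2⟩⟩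
    rw [hleg]
    exact even_ncard_Splus_proj_mem hi (hleg ▸ hfin.sep _)

theorem finite_inter_Splus {N : ℕ} (hN : ∀ x ∈ ξ, x 3 < N) (p : Fin 4 → ℕ) :
    (ξ ∩ Splus p).Finite := by
  refine (Set.finite_Iic fun t => p t + N).subset ?_
  rintro x ⟨hxξ, hx⟩ t
  have h3 := hN x hxξ
  rw [mem_Splus_iff] at hx
  by_cases ht : t = 3
  · subst ht
    exact h3.le.trans (Nat.le_add_left _ _)
  · have := hx.2 t ht
    change x t ≤ p t + N
    lia

end Splus

section Sminus

variable {ξ : Set (Fin 4 → ℕ)} {p x : Fin 4 → ℕ} {m : ℕ}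

/-- The layer `{p − (ε₁,ε₂,ε₃,1) − m·(1,1,1,1) : ε ∈ {0,1}³} ∩ ℕ⁴` of `Sminus p`. Its `t`-th side is
the interval `[p t − m − 1, p t − m]`, or the point `p 3 − m − 1` for `t = 3`; written as below,
truncated subtraction turns it into its intersection with `ℕ`. -/
def sminusLayer (p : Fin 4 → ℕ) (m : ℕ) : Finset (Fin 4 → ℕ) :=
  Fintype.piFinset fun t => Finset.Ico (p t - m - 1) (p t + (if t = 3 then 0 else 1) - m)

theorem mem_sminusLayer : x ∈ sminusLayer p m ↔
    x 3 + m + 1 = p 3 ∧ ∀ t ≠ 3, p t ≤ x t + m + 1 ∧ x t + m ≤ p t := by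
  simp only [sminusLayer, Fintype.mem_piFinset, Finset.mem_Ico]
  constructor
  · intro h
    have := h 3
    refine ⟨by grind, fun t ht => ?_⟩
    have := h t
    grind
  · rintro ⟨h3, h⟩ t
    have := h t
    grind

theorem odd_card_sminusLayer_iff :
    Odd (sminusLayer p m).card ↔ p 0 = m ∧ p 1 = m ∧ p 2 = m ∧ m < p 3 := by
  have hside (k : ℕ) : Odd (k + 1 - m - (k - m - 1)) ↔ k = m := by
    rw [Nat.odd_iff]
    lia
  have hheight (k : ℕ) : Odd (k + 0 - m - (k - m - 1)) ↔ m < k := by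
    rw [Nat.odd_iff]
    lia
  simp only [sminusLayer, Fintype.card_piFinset, Nat.card_Ico, Fin.prod_univ_four, Fin.reduceEq,
    ↓reduceIte, Nat.odd_mul, hside, hheight, and_assoc]

theorem mem_Sminus_iff : x ∈ Sminus p ↔ ∃ m, x ∈ sminusLayer p m := by
  constructor
  · rintro ⟨ε, hε, m, h⟩
    refine ⟨m, mem_sminusLayer.2 ⟨?_, fun t ht => ?_⟩⟩
    · have h3 : (x 3 : ℤ) = p 3 - 1 - m := by simpa using h 3
      lia
    · have ht' : (t : ℕ) < 3 := by lia
      have hxt := h t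
      rw [dif_pos ht'] at hxt
      have := hε ⟨t, ht'⟩
      lia
  · rintro ⟨m, hx⟩
    obtain ⟨h3, h⟩ := mem_sminusLayer.1 hx
    refine ⟨fun t => p t.castSucc - m - x t.castSucc, fun t => ?_, m, ?_⟩
    · have := h t.castSucc (Fin.castSucc_ne_last t)
      lia
    · refine Fin.lastCases ?_ fun t => ?_
      · simp only [Fin.reduceLast, Fin.coe_ofNat_eq_mod, Nat.mod_succ, lt_self_iff_false,
          ↓reduceDIte]
        lia
      · have := h t.castSucc (Fin.castSucc_ne_last t)
        simp only [Fin.val_castSucc, Fin.is_lt, ↓reduceDIte, Fin.eta]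
        lia

theorem Sminus_subset_Iic (p : Fin 4 → ℕ) : Sminus p ⊆ Set.Iic p := by
  intro x hx t
  obtain ⟨m, hx⟩ := mem_Sminus_iff.1 hx
  obtain ⟨h3, h⟩ := mem_sminusLayer.1 hx
  have := h t
  grind

theorem Sminus_eq_biUnion (p : Fin 4 → ℕ) :
    Sminus p = (Finset.range (p 3)).biUnion (sminusLayer p) := by
  ext x
  simp only [mem_Sminus_iff, Finset.mem_coe, Finset.mem_biUnion, Finset.mem_range]
  refine exists_congr fun m => ⟨fun hx => ⟨?_, hx⟩, And.right⟩
  have := (mem_sminusLayer.1 hx).1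
  lia

theorem ncard_Sminus (p : Fin 4 → ℕ) :
    (Sminus p).ncard = ∑ m ∈ Finset.range (p 3), (sminusLayer p m).card := by
  rw [Sminus_eq_biUnion, Set.ncard_coe_finset, Finset.card_biUnion]
  intro m _ m' _ hne
  refine Finset.disjoint_left.2 fun x hx hx' => hne ?_
  have := (mem_sminusLayer.1 hx).1
  have := (mem_sminusLayer.1 hx').1
  lia

theorem odd_ncard_Sminus_iff : Odd (Sminus p).ncard ↔ p 0 = p 1 ∧ p 1 = p 2 ∧ p 2 < p 3 := by
  rw [ncard_Sminus, Finset.odd_sum_iff_odd_card_odd]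
  simp only [odd_card_sminusLayer_iff]
  have hlayers : {m ∈ Finset.range (p 3) | p 0 = m ∧ p 1 = m ∧ p 2 = m ∧ m < p 3} =
      if p 0 = p 1 ∧ p 1 = p 2 ∧ p 2 < p 3 then {p 2} else ∅ := by
    grind
  rw [hlayers]
  split_ifs with hdiag <;> simp [hdiag]

theorem DownClosed.inter_Sminus_eq (hξ : DownClosed ξ) (hp : p ∈ ξ) : ξ ∩ Sminus p = Sminus p :=
  Set.inter_eq_right.2 fun _ hx => hξ.isLowerSet (Sminus_subset_Iic p hx) hp

end Sminus

section Diagonal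

variable {π : Fin 4 → Set (Fin 3 → ℕ)} {ξ : Set (Fin 4 → ℕ)}

theorem finite_setOf_diagonal {N : ℕ} (hN : ∀ x ∈ ξ, x 3 < N) :
    {p ∈ ξ | p 0 = p 1 ∧ p 1 = p 2 ∧ p 2 < p 3}.Finite := by
  refine (Set.finite_Iic fun _ => N).subset ?_
  rintro p ⟨hp, h⟩
  have := hN p hp
  simp only [Set.mem_Iic, Pi.le_def, Fin.forall_fin_succ, Fin.succ_zero_eq_one,
    Fin.succ_one_eq_two, Fin.reduceSucc, IsEmpty.forall_iff, and_true]
  lia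

theorem finsum_mem_sep_one_sub_nlegs (P : (Fin 4 → ℕ) → Prop) [DecidablePred P] :
    ∑ᶠ p ∈ {p ∈ ξ | P p}, (1 - (nlegs π p : ℤ)) =
      ∑ᶠ p ∈ {p ∈ ξ | nlegs π p ≠ 1}, if P p then 1 - (nlegs π p : ℤ) else 0 := by
  classical
  simp only [finsum_mem_def, Set.indicator_apply]
  refine finsum_congr fun p => ?_
  by_cases h : nlegs π p = 1 <;> simp [h, ite_and]

theorem IsSolidPartitionWithLegs.ncard_Sminus_add_finsum_nlegs_Splus_modEq
    (hξ : IsSolidPartitionWithLegs π ξ) (h4 : π 3 = ∅) {p : Fin 4 → ℕ} (hp : p ∈ ξ)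
    (hfin : (ξ ∩ Splus p).Finite) :
    ((ξ ∩ Sminus p).ncard : ℤ) + ∑ᶠ x ∈ ξ ∩ Splus p, (nlegs π x : ℤ) ≡
      if p 0 = p 1 ∧ p 1 = p 2 ∧ p 2 < p 3 then 1 else 0 [ZMOD 2] := by
  have hplus := hξ.even_finsum_nlegs_Splus h4 hfin
  rw [hξ.2.1.inter_Sminus_eq hp]
  split_ifs with hdiag
  · have hminus : Odd (Sminus p).ncard := odd_ncard_Sminus_iff.2 hdiag
    exact Int.odd_iff.1 ((Int.odd_coe_nat _).2 hminus |>.add_even hplus)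
  · have hminus : Even (Sminus p).ncard :=
      Nat.not_odd_iff_even.1 fun hodd => hdiag (odd_ncard_Sminus_iff.1 hodd)
    exact Int.even_iff.1 ((Int.even_coe_nat _).2 hminus |>.add hplus)

end Diagonal

/-- for a solid partition `ξ` with legs `(π¹,π²,π³,π⁴)`, `π⁴ = ∅`:
`Σ_{□ ∈ ξ_fin} (1 − nlegs □)·(|ξ ∩ S₋(□)| + Σ_{□' ∈ ξ ∩ S₊(□)} nlegs □') ≡ NP₄(ξ) mod 2`,
all sums involved being finite. -/
theorem NP_sign_from_canonical_half
    (π : Fin 4 → Set (Fin 3 → ℕ)) (ξ : Set (Fin 4 → ℕ))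
    (hξ : IsSolidPartitionWithLegs π ξ) (h4 : π 3 = ∅) :
    {p ∈ ξ | nlegs π p ≠ 1}.Finite ∧
    {p ∈ ξ | p 0 = p 1 ∧ p 1 = p 2 ∧ p 2 < p 3}.Finite ∧
    (∀ p : Fin 4 → ℕ, (ξ ∩ Sminus p).Finite ∧ (ξ ∩ Splus p).Finite) ∧
    Int.ModEq 2
      (∑ᶠ p ∈ {p ∈ ξ | nlegs π p ≠ 1},
        (1 - (nlegs π p : ℤ)) *
          (((ξ ∩ Sminus p).ncard : ℤ) + ∑ᶠ x ∈ ξ ∩ Splus p, (nlegs π x : ℤ)))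
      (∑ᶠ p ∈ {p ∈ ξ | p 0 = p 1 ∧ p 1 = p 2 ∧ p 2 < p 3}, (1 - (nlegs π p : ℤ))) := by
  have hfin := hξ.finite_setOf_nlegs_ne_one
  obtain ⟨N, hN⟩ := hξ.exists_forall_mem_lt_of_leg_eq_empty h4
  have hplus := finite_inter_Splus hN
  refine ⟨hfin, finite_setOf_diagonal hN, fun p => ⟨?_, hplus p⟩, ?_⟩
  · exact (Set.finite_Iic p).subset (Set.inter_subset_right.trans (Sminus_subset_Iic p))
  rw [finsum_mem_sep_one_sub_nlegs]
  refine finsum_mem_modEq hfin fun p hp => ?_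
  simpa only [mul_ite, mul_one, mul_zero] using
    (hξ.ncard_Sminus_add_finsum_nlegs_Splus_modEq h4 hp.1 (hplus p)).mul_left (1 - nlegs π p : ℤ)
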